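/- The logic RmbC is definable within the minimal bimodal logic E⊕E: for every set of formulas Γ ∪ {φ} over Σ, Γ ⊢_RmbC φ if and only if Γ^t ⊢_{E⊕E} φ^t, where (·)^t is the translation from For(Σ) to For(Σbm) which commutes with ∧, ∨, → and the propositional variables and satisfies (¬ψ)^t = ψ^t → □1 ψ^t and (∘ψ)^t = ∼(ψ^t ∧ □1 ψ^t) ∧ □2 ψ^t, and Γ^t = {ψ^t : ψ ∈ Γ}. -/

import Mathlib

namespace LFI

/-- Formulas over the propositional signature Σ = {∧,∨,→,¬,∘}:
`neg` is the paraconsistent negation ¬ and `circ` the consistency operator ∘. -/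
inductive Formula : Type
  | var : ℕ → Formula
  | and : Formula → Formula → Formula
  | or : Formula → Formula → Formula
  | imp : Formula → Formula → Formula
  | neg : Formula → Formula
  | circ : Formula → Formula

namespace Formula

/-- `α ↔ β` abbreviates `(α→β) ∧ (β→α)`. -/
def iffF (a b : Formula) : Formula := and (imp a b) (imp b a)

/-- Conjunction `γ ∧ γ₁ ∧ … ∧ γₙ` of the nonempty list `γ :: l` (right-associated). -/
def conjL (γ : Formula) : List Formula → Formula
  | [] => γ
  | ψ :: l => and γ (conjL ψ l)

/-- `subst p α γ` is `γ[p/α]`: the result of replacing every occurrence of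
the propositional variable `p` in `γ` by `α`. -/
def subst (p : ℕ) (α : Formula) : Formula → Formula
  | var q => if q = p then α else var q
  | and a b => and (subst p α a) (subst p α b)
  | or a b => or (subst p α a) (subst p α b)
  | imp a b => imp (subst p α a) (subst p α b)
  | neg a => neg (subst p α a)
  | circ a => circ (subst p α a)

end Formula

open Formula

/-- Theoremhood for the Hilbert calculus `RmbC` (axioms Ax1–Ax10 of CPL⁺ plus (bc1),
modus ponens and the replacement rules (R¬), (R∘)) extended with an arbitrary set `Ax`
of extra axiom(-schema instance)s.  `Prf ∅` is theoremhood in RmbC itself. -/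
inductive Prf (Ax : Set Formula) : Formula → Prop
  | ax1 (a b : Formula) : Prf Ax (imp a (imp b a))
  | ax2 (a b c : Formula) :
      Prf Ax (imp (imp a (imp b c)) (imp (imp a b) (imp a c)))
  | ax3 (a b : Formula) : Prf Ax (imp a (imp b (and a b)))
  | ax4 (a b : Formula) : Prf Ax (imp (and a b) a)
  | ax5 (a b : Formula) : Prf Ax (imp (and a b) b)
  | ax6 (a b : Formula) : Prf Ax (imp a (or a b))
  | ax7 (a b : Formula) : Prf Ax (imp b (or a b))
  | ax8 (a b c : Formula) :
      Prf Ax (imp (imp a c) (imp (imp b c) (imp (or a b) c)))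
  | ax9 (a b : Formula) : Prf Ax (or (imp a b) a)
  | ax10 (a : Formula) : Prf Ax (or a (neg a))
  | bc1 (a b : Formula) : Prf Ax (imp (circ a) (imp a (imp (neg a) b)))
  | ext {a : Formula} : a ∈ Ax → Prf Ax a
  | mp {a b : Formula} : Prf Ax (imp a b) → Prf Ax a → Prf Ax b
  | rneg {a b : Formula} : Prf Ax (iffF a b) → Prf Ax (iffF (neg a) (neg b))
  | rcirc {a b : Formula} : Prf Ax (iffF a b) → Prf Ax (iffF (circ a) (circ b))

/-- Local derivation from premises: `Γ ⊢ φ` iff `φ` is a theorem, or there is a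
finite nonempty subset `{γ, γ₁, …, γₙ} ⊆ Γ` with `⊢ (γ ∧ γ₁ ∧ … ∧ γₙ) → φ`. -/
def Deriv (Ax Γ : Set Formula) (φ : Formula) : Prop :=
  Prf Ax φ ∨ ∃ (γ : Formula) (l : List Formula),
    γ ∈ Γ ∧ (∀ ψ ∈ l, ψ ∈ Γ) ∧ Prf Ax (imp (conjL γ l) φ)

end LFI

namespace LFI

/-- Bimodal formulas over Σbm = {∧,∨,→,∼,□₁,◇₁,□₂,◇₂} (`snot` is classical negation ∼). -/
inductive BForm : Type
  | var : ℕ → BForm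
  | and : BForm → BForm → BForm
  | or : BForm → BForm → BForm
  | imp : BForm → BForm → BForm
  | snot : BForm → BForm
  | box1 : BForm → BForm
  | dia1 : BForm → BForm
  | box2 : BForm → BForm
  | dia2 : BForm → BForm

namespace BForm

/-- `α ↔ β` abbreviates `(α→β) ∧ (β→α)`. -/
def iffF (a b : BForm) : BForm := and (imp a b) (imp b a)

/-- Conjunction of the nonempty list `γ :: l` (right-associated). -/
def conjL (γ : BForm) : List BForm → BForm
  | [] => γ
  | ψ :: l => and γ (conjL ψ l)

end BForm

open BForm

/-- Theoremhood in the minimal bimodal logic E⊕E: CPL⁺ (Ax1–Ax9), (PEM), (exp),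
(AxMod_i) for i = 1,2, modus ponens, and the congruence rules (R□_i) for i = 1,2. -/
inductive BPrf : BForm → Prop
  | ax1 (a b : BForm) : BPrf (imp a (imp b a))
  | ax2 (a b c : BForm) :
      BPrf (imp (imp a (imp b c)) (imp (imp a b) (imp a c)))
  | ax3 (a b : BForm) : BPrf (imp a (imp b (and a b)))
  | ax4 (a b : BForm) : BPrf (imp (and a b) a)
  | ax5 (a b : BForm) : BPrf (imp (and a b) b)
  | ax6 (a b : BForm) : BPrf (imp a (or a b))
  | ax7 (a b : BForm) : BPrf (imp b (or a b))
  | ax8 (a b c : BForm) :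
      BPrf (imp (imp a c) (imp (imp b c) (imp (or a b) c)))
  | ax9 (a b : BForm) : BPrf (or (imp a b) a)
  | pem (a : BForm) : BPrf (or a (snot a))
  | exp (a b : BForm) : BPrf (imp a (imp (snot a) b))
  | axMod1 (a : BForm) : BPrf (iffF (dia1 a) (snot (box1 (snot a))))
  | axMod2 (a : BForm) : BPrf (iffF (dia2 a) (snot (box2 (snot a))))
  | mp {a b : BForm} : BPrf (imp a b) → BPrf a → BPrf b
  | rbox1 {a b : BForm} : BPrf (iffF a b) → BPrf (iffF (box1 a) (box1 b))
  | rbox2 {a b : BForm} : BPrf (iffF a b) → BPrf (iffF (box2 a) (box2 b))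

/-- Local derivation from premises in E⊕E. -/
def BDeriv (Γ : Set BForm) (φ : BForm) : Prop :=
  BPrf φ ∨ ∃ (γ : BForm) (l : List BForm),
    γ ∈ Γ ∧ (∀ ψ ∈ l, ψ ∈ Γ) ∧ BPrf (imp (conjL γ l) φ)

/-- Denotation of a bimodal formula in the minimal model `⟨W, N1, N2, d⟩`. -/
def bden {W : Type} (N1 N2 : W → Set (Set W)) (d : ℕ → Set W) : BForm → Set W
  | .var n => d n
  | .and a b => bden N1 N2 d a ∩ bden N1 N2 d b
  | .or a b => bden N1 N2 d a ∪ bden N1 N2 d b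
  | .imp a b => (bden N1 N2 d a)ᶜ ∪ bden N1 N2 d b
  | .snot a => (bden N1 N2 d a)ᶜ
  | .box1 a => {w | bden N1 N2 d a ∈ N1 w}
  | .dia1 a => {w | (bden N1 N2 d a)ᶜ ∉ N1 w}
  | .box2 a => {w | bden N1 N2 d a ∈ N2 w}
  | .dia2 a => {w | (bden N1 N2 d a)ᶜ ∉ N2 w}

/-- Validity w.r.t. the class C'_M of minimal bimodal models. -/
def BValid (φ : BForm) : Prop :=
  ∀ (W : Type), Nonempty W → ∀ (N1 N2 : W → Set (Set W)) (d : ℕ → Set W),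
    bden N1 N2 d φ = Set.univ

/-- Local (degree-preserving) consequence w.r.t. the class C'_M. -/
def BConseq (Γ : Set BForm) (φ : BForm) : Prop :=
  BValid φ ∨ ∃ (γ : BForm) (l : List BForm), γ ∈ Γ ∧ (∀ ψ ∈ l, ψ ∈ Γ) ∧
    BValid (imp (conjL γ l) φ)

/-- The translation `(·)^t : For(Σ) → For(Σbm)`: commutes with ∧,∨,→ and the
variables, `(¬ψ)^t = ψ^t → □₁ψ^t` and `(∘ψ)^t = ∼(ψ^t ∧ □₁ψ^t) ∧ □₂ψ^t`. -/
def tr : Formula → BForm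
  | .var n => .var n
  | .and a b => .and (tr a) (tr b)
  | .or a b => .or (tr a) (tr b)
  | .imp a b => .imp (tr a) (tr b)
  | .neg a => .imp (tr a) (.box1 (tr a))
  | .circ a => .and (.snot (.and (tr a) (.box1 (tr a)))) (.box2 (tr a))

/-- Positive classical logic, abstractly: used to reason in both calculi at once. -/
structure CPLpos {F : Type} (im an orr : F → F → F) (P : F → Prop) : Prop where
  ax1 : ∀ a b, P (im a (im b a))
  ax2 : ∀ a b c, P (im (im a (im b c)) (im (im a b) (im a c)))
  ax3 : ∀ a b, P (im a (im b (an a b)))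
  ax4 : ∀ a b, P (im (an a b) a)
  ax5 : ∀ a b, P (im (an a b) b)
  ax6 : ∀ a b, P (im a (orr a b))
  ax7 : ∀ a b, P (im b (orr a b))
  ax8 : ∀ a b c, P (im (im a c) (im (im b c) (im (orr a b) c)))
  ax9 : ∀ a b, P (orr (im a b) a)
  mp : ∀ {a b}, P (im a b) → P a → P b

/-- Derivations from a list of hypotheses, using theorems and modus ponens. -/
inductive ND {F : Type} (im : F → F → F) (P : F → Prop) (H : List F) : F → Prop
  | hyp {a : F} : a ∈ H → ND im P H a
  | thm {a : F} : P a → ND im P H a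
  | mp {a b : F} : ND im P H (im a b) → ND im P H a → ND im P H b

namespace CPLpos

variable {F : Type} {im an orr : F → F → F} {P : F → Prop}

theorem idd (C : CPLpos im an orr P) (a : F) : P (im a a) :=
  C.mp (C.mp (C.ax2 a (im a a) a) (C.ax1 _ _)) (C.ax1 _ _)

theorem ded (C : CPLpos im an orr P) {H : List F} {a b : F}
    (h : ND im P (a :: H) b) : ND im P H (im a b) := by
  induction h with
  | hyp h =>
    rcases List.mem_cons.1 h with rfl | h
    · exact .thm (C.idd _)
    · exact .mp (.thm (C.ax1 _ _)) (.hyp h)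
  | thm h => exact .mp (.thm (C.ax1 _ _)) (.thm h)
  | mp _ _ ih1 ih2 => exact .mp (.mp (.thm (C.ax2 _ _ _)) ih1) ih2

theorem close (C : CPLpos im an orr P) {a : F} (h : ND im P [] a) : P a := by
  induction h with
  | hyp h => simp at h
  | thm h => exact h
  | mp _ _ ih1 ih2 => exact C.mp ih1 ih2

theorem andI (C : CPLpos im an orr P) {H : List F} {a b : F}
    (h1 : ND im P H a) (h2 : ND im P H b) : ND im P H (an a b) :=
  .mp (.mp (.thm (C.ax3 _ _)) h1) h2

theorem andL (C : CPLpos im an orr P) {H : List F} {a b : F}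
    (h : ND im P H (an a b)) : ND im P H a := .mp (.thm (C.ax4 _ _)) h

theorem andR (C : CPLpos im an orr P) {H : List F} {a b : F}
    (h : ND im P H (an a b)) : ND im P H b := .mp (.thm (C.ax5 _ _)) h

theorem orL (C : CPLpos im an orr P) {H : List F} {a b : F}
    (h : ND im P H a) : ND im P H (orr a b) := .mp (.thm (C.ax6 _ _)) h

theorem orR (C : CPLpos im an orr P) {H : List F} {a b : F}
    (h : ND im P H b) : ND im P H (orr a b) := .mp (.thm (C.ax7 _ _)) h

theorem orE (C : CPLpos im an orr P) {H : List F} {a b c : F}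
    (h : ND im P H (orr a b)) (h1 : ND im P (a :: H) c) (h2 : ND im P (b :: H) c) :
    ND im P H c :=
  .mp (.mp (.mp (.thm (C.ax8 _ _ _)) (C.ded h1)) (C.ded h2)) h

theorem iffI (C : CPLpos im an orr P) {a b : F}
    (h1 : ND im P [a] b) (h2 : ND im P [b] a) : P (an (im a b) (im b a)) :=
  C.close (C.andI (C.ded h1) (C.ded h2))

theorem iffl (C : CPLpos im an orr P) {a b : F} (h : P (an (im a b) (im b a))) :
    P (im a b) := C.mp (C.ax4 _ _) h

theorem iffr (C : CPLpos im an orr P) {a b : F} (h : P (an (im a b) (im b a))) :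
    P (im b a) := C.mp (C.ax5 _ _) h

theorem iffRefl (C : CPLpos im an orr P) (a : F) : P (an (im a a) (im a a)) :=
  C.iffI (.hyp (by simp)) (.hyp (by simp))

theorem iffTrans (C : CPLpos im an orr P) {a b c : F} (h1 : P (an (im a b) (im b a)))
    (h2 : P (an (im b c) (im c b))) : P (an (im a c) (im c a)) :=
  C.iffI (.mp (.thm (C.iffl h2)) (.mp (.thm (C.iffl h1)) (.hyp (by simp))))
    (.mp (.thm (C.iffr h1)) (.mp (.thm (C.iffr h2)) (.hyp (by simp))))

theorem congAnd (C : CPLpos im an orr P) {a b c d : F} (h1 : P (an (im a b) (im b a)))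
    (h2 : P (an (im c d) (im d c))) :
    P (an (im (an a c) (an b d)) (im (an b d) (an a c))) :=
  C.iffI
    (C.andI (.mp (.thm (C.iffl h1)) (C.andL (.hyp (by simp; rfl))))
      (.mp (.thm (C.iffl h2)) (C.andR (.hyp (by simp; rfl)))))
    (C.andI (.mp (.thm (C.iffr h1)) (C.andL (.hyp (by simp; rfl))))
      (.mp (.thm (C.iffr h2)) (C.andR (.hyp (by simp; rfl)))))

theorem congOr (C : CPLpos im an orr P) {a b c d : F} (h1 : P (an (im a b) (im b a)))
    (h2 : P (an (im c d) (im d c))) :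
    P (an (im (orr a c) (orr b d)) (im (orr b d) (orr a c))) :=
  C.iffI
    (C.orE (a := a) (b := c) (.hyp (by simp))
      (C.orL (.mp (.thm (C.iffl h1)) (.hyp (by simp))))
      (C.orR (.mp (.thm (C.iffl h2)) (.hyp (by simp)))))
    (C.orE (a := b) (b := d) (.hyp (by simp))
      (C.orL (.mp (.thm (C.iffr h1)) (.hyp (by simp))))
      (C.orR (.mp (.thm (C.iffr h2)) (.hyp (by simp)))))

theorem congImp (C : CPLpos im an orr P) {a b c d : F} (h1 : P (an (im a b) (im b a)))
    (h2 : P (an (im c d) (im d c))) :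
    P (an (im (im a c) (im b d)) (im (im b d) (im a c))) :=
  C.iffI
    (C.ded (.mp (.thm (C.iffl h2)) (.mp (a := a) (.hyp (by simp))
      (.mp (.thm (C.iffr h1)) (.hyp (by simp))))))
    (C.ded (.mp (.thm (C.iffr h2)) (.mp (a := b) (.hyp (by simp))
      (.mp (.thm (C.iffl h1)) (.hyp (by simp))))))

end CPLpos

theorem cB : CPLpos BForm.imp BForm.and BForm.or BPrf :=
  ⟨.ax1, .ax2, .ax3, .ax4, .ax5, .ax6, .ax7, .ax8, .ax9, .mp⟩

theorem cF : CPLpos Formula.imp Formula.and Formula.or (Prf ∅) :=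
  ⟨.ax1, .ax2, .ax3, .ax4, .ax5, .ax6, .ax7, .ax8, .ax9, .mp⟩

theorem congSnot {a b : BForm} (h : BPrf (BForm.iffF a b)) :
    BPrf (BForm.iffF (.snot a) (.snot b)) := by
  have key : ∀ a b : BForm, BPrf (.imp b a) → ND BForm.imp BPrf [.snot a] (.snot b) := by
    intro a b h
    refine cB.orE (a := b) (b := .snot b) (.thm (.pem b)) ?_ (.hyp (by simp))
    exact .mp (.mp (a := a) (.thm (.exp _ _)) (.mp (.thm h) (.hyp (by simp)))) (.hyp (by simp))
  exact cB.iffI (key _ _ (cB.iffr h)) (key _ _ (cB.iffl h))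

theorem tr_sound {a : Formula} (h : Prf ∅ a) : BPrf (tr a) := by
  induction h with
  | ax1 a b => exact .ax1 _ _
  | ax2 a b c => exact .ax2 _ _ _
  | ax3 a b => exact .ax3 _ _
  | ax4 a b => exact .ax4 _ _
  | ax5 a b => exact .ax5 _ _
  | ax6 a b => exact .ax6 _ _
  | ax7 a b => exact .ax7 _ _
  | ax8 a b c => exact .ax8 _ _ _
  | ax9 a b => exact .ax9 _ _
  | ax10 a =>
    exact cB.close (cB.orE (.thm (.ax9 (tr a) (.box1 (tr a)))) (cB.orR (.hyp (by simp [tr])))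
      (cB.orL (.hyp (by simp [tr]))))
  | bc1 a b =>
    refine cB.close (cB.ded (cB.ded (cB.ded ?_)))
    refine .mp (.mp (a := .and (tr a) (.box1 (tr a))) (.thm (.exp _ _)) ?_) ?_
    · exact cB.andI (.hyp (by simp [tr])) (.mp (a := tr a) (.hyp (by simp [tr])) (.hyp (by simp [tr])))
    · exact cB.andL (b := .box2 (tr a)) (.hyp (by simp [tr]))
  | ext h => exact absurd h (by simp)
  | mp _ _ ih1 ih2 => exact .mp ih1 ih2
  | rneg _ ih => exact cB.congImp ih (.rbox1 ih)
  | rcirc _ ih => exact cB.congAnd (congSnot (cB.congAnd ih (.rbox1 ih))) (.rbox2 ih)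

/-- A falsum definable in RmbC. -/
def fls : Formula :=
  .and (.circ (.var 0)) (.and (.var 0) (.neg (.var 0)))

theorem fls_elim {H : List Formula} {b : Formula}
    (h : ND Formula.imp (Prf ∅) H fls) : ND Formula.imp (Prf ∅) H b :=
  .mp (.mp (.mp (.thm (.bc1 (.var 0) b)) (cF.andL h)) (cF.andL (cF.andR h)))
    (cF.andR (cF.andR h))

/-- The back-translation: `□₁` is read as `¬`, `□₂` as `∘`. -/
def bk : BForm → Formula
  | .var n => .var n
  | .and a b => .and (bk a) (bk b)
  | .or a b => .or (bk a) (bk b)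
  | .imp a b => .imp (bk a) (bk b)
  | .snot a => .imp (bk a) fls
  | .box1 a => .neg (bk a)
  | .dia1 a => .imp (.neg (.imp (bk a) fls)) fls
  | .box2 a => .circ (bk a)
  | .dia2 a => .imp (.circ (.imp (bk a) fls)) fls

theorem bk_sound {a : BForm} (h : BPrf a) : Prf ∅ (bk a) := by
  induction h with
  | ax1 a b => exact .ax1 _ _
  | ax2 a b c => exact .ax2 _ _ _
  | ax3 a b => exact .ax3 _ _
  | ax4 a b => exact .ax4 _ _
  | ax5 a b => exact .ax5 _ _
  | ax6 a b => exact .ax6 _ _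
  | ax7 a b => exact .ax7 _ _
  | ax8 a b c => exact .ax8 _ _ _
  | ax9 a b => exact .ax9 _ _
  | pem a =>
    exact cF.close (cF.orE (.thm (.ax9 (bk a) fls)) (cF.orR (.hyp (by simp [bk])))
      (cF.orL (.hyp (by simp [bk]))))
  | exp a b =>
    exact cF.close (cF.ded (cF.ded (fls_elim (.mp (a := bk a) (.hyp (by simp [bk]))
      (.hyp (by simp [bk]))))))
  | axMod1 a => exact cF.iffRefl _
  | axMod2 a => exact cF.iffRefl _
  | mp _ _ ih1 ih2 => exact .mp ih1 ih2
  | rbox1 _ ih => exact .rneg ih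
  | rbox2 _ ih => exact .rcirc ih

theorem neg_def (a : Formula) : Prf ∅ (Formula.iffF (.imp a (.neg a)) (.neg a)) := by
  refine cF.iffI ?_ (cF.ded (.hyp (by simp)))
  exact cF.orE (.thm (.ax10 a)) (.mp (a := a) (.hyp (by simp)) (.hyp (by simp)))
    (.hyp (by simp))

theorem circ_def (a : Formula) : Prf ∅
    (Formula.iffF (.and (.imp (.and a (.neg a)) fls) (.circ a)) (.circ a)) := by
  refine cF.iffI (cF.andR (a := .imp (.and a (.neg a)) fls) (.hyp (by simp)))
    (cF.andI (cF.ded ?_) (.hyp (by simp)))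
  exact .mp (.mp (.mp (.thm (.bc1 a fls)) (.hyp (by simp)))
    (cF.andL (b := .neg a) (.hyp (by simp)))) (cF.andR (a := a) (.hyp (by simp)))

theorem bk_tr (a : Formula) : Prf ∅ (Formula.iffF (bk (tr a)) a) := by
  induction a with
  | var n => exact cF.iffRefl _
  | and a b iha ihb => exact cF.congAnd iha ihb
  | or a b iha ihb => exact cF.congOr iha ihb
  | imp a b iha ihb => exact cF.congImp iha ihb
  | neg a ih => exact cF.iffTrans (neg_def _) (.rneg ih)
  | circ a ih => exact cF.iffTrans (circ_def _) (.rcirc ih)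

theorem tr_reflect {a : Formula} (h : BPrf (tr a)) : Prf ∅ a :=
  cF.mp (cF.iffl (bk_tr a)) (bk_sound h)

theorem tr_conjL (γ : Formula) (l : List Formula) :
    tr (Formula.conjL γ l) = BForm.conjL (tr γ) (l.map tr) := by
  induction l generalizing γ with
  | nil => rfl
  | cons ψ l ih => simp [Formula.conjL, BForm.conjL, tr, ih]

/-- Theorem 5.15: RmbC is definable within E⊕E:
`Γ ⊢_RmbC φ` iff `Γ^t ⊢_{E⊕E} φ^t`. -/
theorem rmbc_definable_in_eoe (Γ : Set Formula) (φ : Formula) :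
    Deriv ∅ Γ φ ↔ BDeriv (tr '' Γ) (tr φ) := by
  constructor
  · rintro (h | ⟨γ, l, hγ, hl, h⟩)
    · exact Or.inl (tr_sound h)
    · refine Or.inr ⟨tr γ, l.map tr, ⟨γ, hγ, rfl⟩, ?_, ?_⟩
      · intro ψ hψ
        obtain ⟨χ, hχ, rfl⟩ := List.mem_map.1 hψ
        exact ⟨χ, hl χ hχ, rfl⟩
      · rw [← tr_conjL]
        exact tr_sound h
  · rintro (h | ⟨γ, l, ⟨γ, hγ, rfl⟩, hl, h⟩)
    · exact Or.inl (tr_reflect h)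
    · have hl' : ∃ m : List Formula, (∀ ψ ∈ m, ψ ∈ Γ) ∧ m.map tr = l := by
        clear h
        induction l with
        | nil => exact ⟨[], by simp, rfl⟩
        | cons ψ l ih =>
          obtain ⟨m, hm, rfl⟩ := ih (fun χ hχ => hl χ (List.mem_cons_of_mem _ hχ))
          obtain ⟨χ, hχ, rfl⟩ := hl ψ List.mem_cons_self
          exact ⟨χ :: m, by simpa using ⟨hχ, hm⟩, rfl⟩
      obtain ⟨m, hm, rfl⟩ := hl'
      rw [← tr_conjL] at h
      exact Or.inr ⟨γ, m, hγ, hm, tr_reflect (a := .imp (Formula.conjL γ m) φ) h⟩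

end LFI
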